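/- Let V be a finite index set, let β_v > 0, p_v > 0, λ_v > 0 for v ∈ V with Σ_{v∈V} β_v = 1. Let Q and Q' be two solutions of the mean-field slotted-Aloha dynamical system such that for every v ∈ V, Q(0)(v,·) ≤_st Q'(0)(v,·). Then for every τ ≥ 0 and every v ∈ V, Q(τ)(v,·) ≤_st Q'(τ)(v,·), i.e., Σ_{l=0}^k Q_{(v,l)}(τ) ≥ Σ_{l=0}^k Q'_{(v,l)}(τ) for every k ∈ ℕ. -/

import Mathlib

/-!
Write `P k = ∑_{l<k} (Q_{(v,l)} - Q'_{(v,l)})`, so that the claim is `0 ≤ P (k+1)`. The equations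
telescope: `∑_{l≤k} Q_{(v,l)}` has derivative `-λ Q_{(v,k)} + μ Q_{(v,k+1)}` with `μ = p e^{-γ}`
(`hasDeriv_partialSum`).

The proof is a maximum principle with a barrier. For `ε > 0` and `K` large, `P k + ε k e^{Kτ} > 0`
for all `k ≥ 1`, `v` and `τ ≥ 0`. Because the barrier grows with `k` while `|P k| ≤ 1`, only
finitely many `k` can ever fail, so a failure has a first time (`pos_of_deriv_pos_at_zero`). At that
time, with `E = ε e^{Kτ}`, all the inequalities `-k E ≤ P k` hold and one is an equality; the two
neighbouring inequalities and the monotone dependence of `μ` on the masses `Q_{(v,0)}` bound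
the derivative of that `P k` below by `-p (1 + ∑ β p) E` (`drift_lower_bound`). The barrier grows
faster than this, so the perturbed quantity would be increasing while reaching `0` from above,
which is impossible. Letting `ε → 0` gives the claim.
-/

open Filter Set Real

/-- `γ(τ) = Σ_v β_v p_v (1 − Q_{(v,0)}(τ))`. -/
noncomputable def gammaFn {V : Type*} [Fintype V] (β p : V → ℝ)
    (Q : V → ℕ → ℝ → ℝ) (τ : ℝ) : ℝ :=
  ∑ v, β v * p v * (1 - Q v 0 τ)

/-- A solution of the mean-field slotted-Aloha dynamical system: a family of
functions `Q v k : [0,∞) → [0,1]` summing to `1` over `k`, satisfying the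
Kolmogorov ODEs on `[0,∞)`. -/
def IsMFSolution {V : Type*} [Fintype V] (β p lam : V → ℝ)
    (Q : V → ℕ → ℝ → ℝ) : Prop :=
  (∀ v k τ, 0 ≤ τ → Q v k τ ∈ Set.Icc (0:ℝ) 1) ∧
  (∀ v τ, 0 ≤ τ → HasSum (fun k => Q v k τ) 1) ∧
  (∀ v k τ, 0 ≤ τ → HasDerivWithinAt (Q v k)
    (lam v * ((if k = 0 then 0 else Q v (k-1) τ) - Q v k τ)
      + p v * Real.exp (-(gammaFn β p Q τ)) *
        (Q v (k+1) τ - (if k = 0 then 0 else Q v k τ)))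
    (Set.Ici (0:ℝ)) τ)

/-- Finitely many functions, positive at time `0`, stay positive if any of them that is the first to
reach zero would have a positive derivative there. -/
lemma pos_of_deriv_pos_at_zero {ι : Type*} [Finite ι] (f f' : ι → ℝ → ℝ)
    (hd : ∀ i t, 0 ≤ t → HasDerivWithinAt (f i) (f' i t) (Set.Ici 0) t)
    (h0 : ∀ i, 0 < f i 0)
    (hpos : ∀ i t, 0 < t → (∀ j, 0 ≤ f j t) → f i t = 0 → 0 < f' i t) :
    ∀ t, 0 ≤ t → ∀ i, 0 < f i t := by
  intro T hT i₀
  by_contra! hbad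
  have hc : ∀ i, ContinuousOn (f i) (Set.Ici 0) := fun i t ht => (hd i t ht).continuousWithinAt
  -- The set of bad times before `T`; finiteness of `ι` makes it closed.
  let B : Set ℝ := ⋃ i, (Set.Icc 0 T ∩ f i ⁻¹' Set.Iic 0)
  have hBc : IsCompact B := by
    refine isCompact_iUnion fun i => ?_
    refine isCompact_Icc.of_isClosed_subset ?_ Set.inter_subset_left
    exact ((hc i).mono Set.Icc_subset_Ici_self).preimage_isClosed_of_isClosed isClosed_Icc
      isClosed_Iic
  obtain ⟨t, htB, hmin⟩ :=
    hBc.exists_isLeast ⟨T, Set.mem_iUnion.2 ⟨i₀, ⟨hT, le_rfl⟩, hbad⟩⟩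
  obtain ⟨i, ⟨ht0, htT⟩, hi⟩ := Set.mem_iUnion.1 htB
  have hi : f i t ≤ 0 := hi
  have htpos : 0 < t := lt_of_le_of_ne ht0 (by rintro rfl; exact absurd (h0 i) (not_lt.2 hi))
  have hbefore : ∀ j s, 0 ≤ s → s < t → 0 < f j s := by
    intro j s hs hst
    by_contra! hneg
    exact absurd (hmin (Set.mem_iUnion.2 ⟨j, ⟨hs, hst.le.trans htT⟩, hneg⟩)) (not_le.2 hst)
  have hda : ∀ j, HasDerivAt (f j) (f' j t) t := fun j =>
    (hd j t ht0).hasDerivAt (Ici_mem_nhds htpos)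
  have hev : ∀ᶠ s in nhdsWithin t (Set.Iio t), s ∈ Set.Ico 0 t := Ico_mem_nhdsLT htpos
  have hge : ∀ j, 0 ≤ f j t := fun j =>
    ge_of_tendsto ((hda j).continuousAt.tendsto.mono_left nhdsWithin_le_nhds)
      (hev.mono fun s hs => (hbefore j s hs.1 hs.2).le)
  have hzero : f i t = 0 := le_antisymm hi (hge i)
  have hslope : Tendsto (slope (f i) t) (nhdsWithin t (Set.Iio t)) (nhds (f' i t)) :=
    (hasDerivAt_iff_tendsto_slope.1 (hda i)).mono_left
      (nhdsWithin_mono _ fun s hs => ne_of_lt hs)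
  have hle : f' i t ≤ 0 := by
    refine le_of_tendsto hslope (hev.mono fun s hs => ?_)
    rw [slope_def_field, hzero, sub_zero]
    exact div_nonpos_of_nonneg_of_nonpos (hbefore i s hs.1 hs.2).le (by linarith [hs.2])
  exact absurd (hpos i t htpos hge hzero) (not_lt.2 hle)

section

variable {V : Type*} [Fintype V] {β p lam : V → ℝ} {Q Q' : V → ℕ → ℝ → ℝ}

lemma hasDeriv_partialSum (hQ : IsMFSolution β p lam Q) (v : V) (k : ℕ) {τ : ℝ} (hτ : 0 ≤ τ) :
    HasDerivWithinAt (fun t => ∑ l ∈ Finset.range (k+1), Q v l t)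
      (-lam v * Q v k τ + p v * Real.exp (-(gammaFn β p Q τ)) * Q v (k+1) τ)
      (Set.Ici (0:ℝ)) τ := by
  induction k with
  | zero =>
    have h := hQ.2.2 v 0 τ hτ
    simp only [zero_add, Finset.sum_range_one]
    refine h.congr_deriv ?_
    simp
  | succ k ih =>
    have h := ih.fun_add (hQ.2.2 v (k+1) τ hτ)
    simp only [Finset.sum_range_succ _ (k+1)]
    refine h.congr_deriv ?_
    simp
    ring

lemma partialSum_nonneg (hQ : IsMFSolution β p lam Q) (v : V) (k : ℕ) {τ : ℝ} (hτ : 0 ≤ τ) :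
    0 ≤ ∑ l ∈ Finset.range k, Q v l τ :=
  Finset.sum_nonneg fun l _ => (hQ.1 v l τ hτ).1

lemma partialSum_le_one (hQ : IsMFSolution β p lam Q) (v : V) (k : ℕ) {τ : ℝ} (hτ : 0 ≤ τ) :
    ∑ l ∈ Finset.range k, Q v l τ ≤ 1 :=
  sum_le_hasSum _ (fun l _ => (hQ.1 v l τ hτ).1) (hQ.2.1 v τ hτ)

lemma gammaFn_nonneg (hβ : ∀ v, 0 < β v) (hp : ∀ v, 0 < p v) (hQ : IsMFSolution β p lam Q)
    {τ : ℝ} (hτ : 0 ≤ τ) : 0 ≤ gammaFn β p Q τ :=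
  Finset.sum_nonneg fun v _ =>
    mul_nonneg (mul_pos (hβ v) (hp v)).le (by linarith [(hQ.1 v 0 τ hτ).2])

/-- If the empty-queue masses are ordered up to an error `E`, so are the factors `e^{-γ}`. -/
lemma exp_gammaFn_sub (hβ : ∀ v, 0 < β v) (hp : ∀ v, 0 < p v)
    (hQ' : IsMFSolution β p lam Q') {τ E : ℝ} (hτ : 0 ≤ τ) (hE : 0 ≤ E)
    (h : ∀ v, -E ≤ Q v 0 τ - Q' v 0 τ) :
    Real.exp (-(gammaFn β p Q' τ)) - (∑ v, β v * p v) * E ≤ Real.exp (-(gammaFn β p Q τ)) := by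
  have hC : 0 ≤ (∑ v, β v * p v) * E :=
    mul_nonneg (Finset.sum_nonneg fun v _ => (mul_pos (hβ v) (hp v)).le) hE
  have hγ : gammaFn β p Q τ ≤ gammaFn β p Q' τ + (∑ v, β v * p v) * E := by
    unfold gammaFn
    rw [Finset.sum_mul, ← Finset.sum_add_distrib]
    refine Finset.sum_le_sum fun v _ => ?_
    rw [← mul_add]
    exact mul_le_mul_of_nonneg_left (by linarith [h v]) (mul_pos (hβ v) (hp v)).le
  have hγ' : Real.exp (-(gammaFn β p Q' τ)) ≤ 1 :=
    Real.exp_le_one_iff.2 (by linarith [gammaFn_nonneg hβ hp hQ' hτ])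
  have h1 : Real.exp (-(gammaFn β p Q' τ)) * Real.exp (-((∑ v, β v * p v) * E))
      ≤ Real.exp (-(gammaFn β p Q τ)) := by
    rw [← Real.exp_add]
    exact Real.exp_le_exp.2 (by linarith)
  have h2 := Real.add_one_le_exp (-((∑ v, β v * p v) * E))
  nlinarith [Real.exp_pos (-(gammaFn β p Q' τ))]

/-- At a contact point with the barrier `-j E`, the difference of the derivatives of the two
partial sums is at least `-p (1 + ∑ β p) E`. -/
lemma drift_lower_bound (hβ : ∀ v, 0 < β v) (hp : ∀ v, 0 < p v) (hlam : ∀ v, 0 < lam v)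
    (hQ : IsMFSolution β p lam Q) (hQ' : IsMFSolution β p lam Q') {τ E : ℝ} (hτ : 0 ≤ τ)
    (hE : 0 ≤ E)
    (h : ∀ v (j : ℕ), -(j * E) ≤
      ∑ l ∈ Finset.range j, Q v l τ - ∑ l ∈ Finset.range j, Q' v l τ)
    (v : V) (k : ℕ)
    (hk : ∑ l ∈ Finset.range (k+1), Q v l τ - ∑ l ∈ Finset.range (k+1), Q' v l τ
      = -((k+1) * E)) :
    -(p v * (1 + ∑ w, β w * p w) * E) ≤
      (-lam v * Q v k τ + p v * Real.exp (-(gammaFn β p Q τ)) * Q v (k+1) τ)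
      - (-lam v * Q' v k τ + p v * Real.exp (-(gammaFn β p Q' τ)) * Q' v (k+1) τ) := by
  have hexp := exp_gammaFn_sub hβ hp hQ' hτ hE (Q := Q) fun v => by simpa using h v 1
  have hlow : Q v k τ - Q' v k τ ≤ 0 := by
    have := h v k
    simp only [Finset.sum_range_succ _ k] at hk
    linarith
  have hhigh : -E ≤ Q v (k+1) τ - Q' v (k+1) τ := by
    have := h v (k+1+1)
    simp only [Finset.sum_range_succ _ (k+1)] at this
    push_cast at this
    linarith
  have hC : 0 ≤ (∑ v, β v * p v) * E :=
    mul_nonneg (Finset.sum_nonneg fun v _ => (mul_pos (hβ v) (hp v)).le) hE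
  have hx1 : Real.exp (-(gammaFn β p Q τ)) ≤ 1 :=
    Real.exp_le_one_iff.2 (by linarith [gammaFn_nonneg hβ hp hQ hτ])
  have hx0 := Real.exp_pos (-(gammaFn β p Q τ))
  obtain ⟨hq0, hq1⟩ := hQ'.1 v (k+1) τ hτ
  generalize Real.exp (-(gammaFn β p Q τ)) = x at *
  generalize Real.exp (-(gammaFn β p Q' τ)) = y at *
  generalize (∑ v, β v * p v) = C at *
  have h1 : 0 ≤ -(lam v * (Q v k τ - Q' v k τ)) := by nlinarith [hlam v]
  have h2 : -E ≤ x * (Q v (k+1) τ - Q' v (k+1) τ) := by nlinarith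
  have h3 : -(C * E) ≤ (x - y) * Q' v (k+1) τ := by nlinarith
  have h4 : p v * (-E + -(C * E)) ≤
      p v * (x * (Q v (k+1) τ - Q' v (k+1) τ) + (x - y) * Q' v (k+1) τ) :=
    mul_le_mul_of_nonneg_left (add_le_add h2 h3) (hp v).le
  linarith

/-- The barrier inequality; `K` is any rate exceeding all the `p v * (1 + ∑ β p)`. -/
lemma barrier_pos (hβ : ∀ v, 0 < β v) (hp : ∀ v, 0 < p v) (hlam : ∀ v, 0 < lam v)
    (hQ : IsMFSolution β p lam Q) (hQ' : IsMFSolution β p lam Q')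
    (h0 : ∀ v, ∀ k : ℕ,
      ∑ l ∈ Finset.range (k+1), Q' v l 0 ≤ ∑ l ∈ Finset.range (k+1), Q v l 0)
    {K ε : ℝ} (hK0 : 0 ≤ K) (hK : ∀ v, p v * (1 + ∑ w, β w * p w) < K) (hε : 0 < ε)
    {τ : ℝ} (hτ : 0 ≤ τ) (v : V) (k : ℕ) :
    0 < ∑ l ∈ Finset.range (k+1), Q v l τ - ∑ l ∈ Finset.range (k+1), Q' v l τ
      + (k+1) * (ε * Real.exp (K * τ)) := by
  obtain ⟨N, hN⟩ := exists_nat_gt (1 / ε)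
  rw [div_lt_iff₀ hε] at hN
  -- Beyond `N` the barrier exceeds the trivial bound `1` on the difference.
  have hlarge : ∀ v (j : ℕ) t, 0 ≤ t → N ≤ j →
      0 < ∑ l ∈ Finset.range (j+1), Q v l t - ∑ l ∈ Finset.range (j+1), Q' v l t
        + (j+1) * (ε * Real.exp (K * t)) := by
    intro v j t ht hj
    have h1 := partialSum_nonneg hQ v (j+1) ht
    have h2 := partialSum_le_one hQ' v (j+1) ht
    have h3 : (1:ℝ) ≤ Real.exp (K * t) := Real.one_le_exp (mul_nonneg hK0 ht)
    have h4 : (N:ℝ) ≤ j := by exact_mod_cast hj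
    have h5 : ε ≤ ε * Real.exp (K * t) := le_mul_of_one_le_right hε.le h3
    have h6 : (N:ℝ) * ε ≤ (j+1) * (ε * Real.exp (K * t)) :=
      mul_le_mul (by linarith) h5 hε.le (by positivity)
    linarith
  have key := pos_of_deriv_pos_at_zero (ι := V × Fin N)
    (fun i t => ∑ l ∈ Finset.range (i.2+1), Q i.1 l t - ∑ l ∈ Finset.range (i.2+1), Q' i.1 l t
      + ((i.2:ℕ)+1) * (ε * Real.exp (K * t)))
    (fun i t => (-lam i.1 * Q i.1 i.2 t
        + p i.1 * Real.exp (-(gammaFn β p Q t)) * Q i.1 (i.2+1) t)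
      - (-lam i.1 * Q' i.1 i.2 t + p i.1 * Real.exp (-(gammaFn β p Q' t)) * Q' i.1 (i.2+1) t)
      + ((i.2:ℕ)+1) * (ε * (Real.exp (K * t) * K)))
    ?_ ?_ ?_
  · by_cases hk : k < N
    · exact key τ hτ (v, ⟨k, hk⟩)
    · exact hlarge v k τ hτ (not_lt.1 hk)
  · rintro ⟨v, j⟩ t ht
    have he : HasDerivAt (fun t => Real.exp (K * t)) (Real.exp (K * t) * K) t := by
      simpa using ((hasDerivAt_id t).const_mul K).exp
    exact ((hasDeriv_partialSum hQ v j ht).fun_sub (hasDeriv_partialSum hQ' v j ht)).fun_add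
      ((he.const_mul ε).const_mul (((j:ℕ):ℝ)+1)).hasDerivWithinAt
  · rintro ⟨v, j⟩
    have h1 := h0 v j
    have : 0 < (((j:ℕ):ℝ)+1) * (ε * Real.exp (K * 0)) := by positivity
    dsimp only
    linarith
  · rintro ⟨v, j⟩ t ht hall hzero
    dsimp only at hall hzero ⊢
    have hE : 0 < ε * Real.exp (K * t) := by positivity
    have hb : ∀ v (j : ℕ), -(j * (ε * Real.exp (K * t))) ≤
        ∑ l ∈ Finset.range j, Q v l t - ∑ l ∈ Finset.range j, Q' v l t := by
      rintro v (_ | j)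
      · simp
      · push_cast
        by_cases hj : j < N
        · linarith [hall (v, ⟨j, hj⟩)]
        · linarith [hlarge v j t ht.le (not_lt.1 hj)]
    have hdr := drift_lower_bound hβ hp hlam hQ hQ' ht.le hE.le hb v j (by linarith)
    have h1 : p v * (1 + ∑ w, β w * p w) * (ε * Real.exp (K * t))
        < K * (ε * Real.exp (K * t)) := mul_lt_mul_of_pos_right (hK v) hE
    have h2 : 0 ≤ ((j:ℕ):ℝ) * (K * (ε * Real.exp (K * t))) := by positivity
    linarith

end

/-- Lemma 1 (first part): monotonicity of the mean-field slotted-Aloha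
dynamical system with respect to the initial condition. If `Q(0)(v,·)` is
stochastically dominated by `Q'(0)(v,·)` for every class `v` (i.e. the partial
sums of `Q` dominate those of `Q'`), then the same holds at all times `τ ≥ 0`. -/
theorem aloha_meanfield_stochastic_monotone
    {V : Type*} [Fintype V]
    (β p lam : V → ℝ)
    (hβ : ∀ v, 0 < β v) (hp : ∀ v, 0 < p v) (hlam : ∀ v, 0 < lam v)
    (hβsum : ∑ v, β v = 1)
    (Q Q' : V → ℕ → ℝ → ℝ)
    (hQ : IsMFSolution β p lam Q) (hQ' : IsMFSolution β p lam Q')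
    (h0 : ∀ v, ∀ k : ℕ,
      ∑ l ∈ Finset.range (k+1), Q' v l 0 ≤ ∑ l ∈ Finset.range (k+1), Q v l 0) :
    ∀ τ, 0 ≤ τ → ∀ v, ∀ k : ℕ,
      ∑ l ∈ Finset.range (k+1), Q' v l τ ≤ ∑ l ∈ Finset.range (k+1), Q v l τ := by
  intro τ hτ v k
  have hC : 0 ≤ ∑ w, β w * p w := Finset.sum_nonneg fun w _ => (mul_pos (hβ w) (hp w)).le
  obtain ⟨K, hK0, hK⟩ : ∃ K : ℝ, 0 ≤ K ∧ ∀ v, p v * (1 + ∑ w, β w * p w) < K := by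
    have hsum : 0 ≤ ∑ w, p w := Finset.sum_nonneg fun w _ => (hp w).le
    refine ⟨(∑ w, p w) * (1 + ∑ w, β w * p w) + 1, by positivity, fun v => ?_⟩
    have hv : p v ≤ ∑ w, p w :=
      Finset.single_le_sum (fun w _ => (hp w).le) (Finset.mem_univ v)
    linarith [mul_le_mul_of_nonneg_right hv (by linarith : 0 ≤ 1 + ∑ w, β w * p w)]
  refine le_of_forall_pos_le_add fun δ hδ => ?_
  -- `ε` is chosen so that the barrier at `(k, τ)` equals `δ`.
  have hM : 0 < ((k:ℝ)+1) * Real.exp (K * τ) := by positivity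
  have h := barrier_pos hβ hp hlam hQ hQ' h0 hK0 hK (div_pos hδ hM) hτ v k
  have he : ((k:ℝ)+1) * (δ / (((k:ℝ)+1) * Real.exp (K * τ)) * Real.exp (K * τ)) = δ := by
    field_simp
  linarith
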